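/- Clustering of the rectangular-polar change of variables at the target point: for every α ∈ (−1, 1), the map w_α is (p − 1) times continuously differentiable on (−1, 1), and its k-th derivative at τ = 0 vanishes for every integer k with 1 ≤ k ≤ p − 1. -/

import Mathlib

/-!
With `s = τ / π` one has `v(π s) = s q(s)` for a quadratic polynomial `q`, and
`v(2π - π s) = 1 - v(π s)`. Since `x ^ p + (1 - x) ^ p > 0` for every real `x` and `p ≥ 1`, it follows
that `w(π s) = s ^ p G(s)` with `G` smooth on all of `ℝ` (`wCK_pi_mul`, `contDiff_cofactorCK`).
Hence `w_α - α` is given on each side of the origin by `τ ^ p` times a smooth function. Gluing two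
such functions at `0` gives a function of class `C^(p-1)` whose derivatives up to order `p - 1`
vanish at `0` (`glue_contDiff`): differentiating the glued function
yields a glued function of the same shape with the exponent lowered by one.
-/

open Real

/-- The function `v` from equation (colt_kress_2), depending on an integer parameter `p`. -/
noncomputable def vCK (p : ℕ) (τ : ℝ) : ℝ :=
  (1 / (p : ℝ) - 1 / 2) * ((π - τ) / π) ^ 3 + (1 / (p : ℝ)) * ((τ - π) / π) + 1 / 2

/-- The Colton–Kress change of variables `w` from equation (colt_kress_1). -/
noncomputable def wCK (p : ℕ) (τ : ℝ) : ℝ :=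
  2 * π * (vCK p τ) ^ p / ((vCK p τ) ^ p + (vCK p (2 * π - τ)) ^ p)

/-- The rectangular-polar change of variables `w_α` for `α ∈ (−1, 1)`. -/
noncomputable def wRP (p : ℕ) (α : ℝ) (τ : ℝ) : ℝ :=
  α + ((Real.sign τ - α) / π) * wCK p (π * |τ|)

/-- The function equal to `x ^ m * g x` for `x < 0` and to `x ^ m * h x` for `x ≥ 0`. -/
noncomputable def gluePow (m : ℕ) (g h : ℝ → ℝ) (x : ℝ) : ℝ :=
  if x < 0 then x ^ m * g x else x ^ m * h x

/-- The function `G` such that the derivative of `x ^ (m + 1) * g x` is `x ^ m * G x`. -/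
noncomputable def derivCofactor (m : ℕ) (g : ℝ → ℝ) (x : ℝ) : ℝ :=
  ((m + 1 : ℕ) : ℝ) * g x + x * deriv g x

lemma hasDerivAt_pow_mul (m : ℕ) {g : ℝ → ℝ} (hg : ContDiff ℝ (⊤ : ℕ∞) g) (x : ℝ) :
    HasDerivAt (fun y => y ^ (m + 1) * g y) (x ^ m * derivCofactor m g x) x := by
  have h1 : HasDerivAt g (deriv g x) x :=
    (hg.differentiable (by simp) x).hasDerivAt
  refine ((hasDerivAt_pow (m + 1) x).mul h1).congr_deriv ?_
  rw [derivCofactor, Nat.add_sub_cancel]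
  ring

lemma contDiff_derivCofactor (m : ℕ) {g : ℝ → ℝ} (hg : ContDiff ℝ (⊤ : ℕ∞) g) :
    ContDiff ℝ (⊤ : ℕ∞) (derivCofactor m g) := by
  have h1 : ContDiff ℝ (⊤ : ℕ∞) (deriv g) := (contDiff_infty_iff_deriv.1 hg).2
  exact (contDiff_const.mul hg).add (contDiff_id.mul h1)

/-- The exponent is at least `2`, so that both one-sided derivatives vanish at the origin. -/
lemma hasDerivAt_gluePow (m : ℕ) {g h : ℝ → ℝ} (hg : ContDiff ℝ (⊤ : ℕ∞) g)
    (hh : ContDiff ℝ (⊤ : ℕ∞) h) (x : ℝ) :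
    HasDerivAt (gluePow (m + 2) g h)
      (gluePow (m + 1) (derivCofactor (m + 1) g) (derivCofactor (m + 1) h) x) x := by
  have dg := hasDerivAt_pow_mul (m + 1) hg x
  have dh := hasDerivAt_pow_mul (m + 1) hh x
  rcases lt_trichotomy x 0 with hx | hx | hx
  · have e : gluePow (m + 2) g h =ᶠ[nhds x] fun y => y ^ (m + 1 + 1) * g y := by
      filter_upwards [Iio_mem_nhds hx] with y hy
      exact if_pos hy
    simpa [gluePow, hx] using dg.congr_of_eventuallyEq e
  · subst hx
    have z : gluePow (m + 1) (derivCofactor (m + 1) g) (derivCofactor (m + 1) h) 0 = 0 := by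
      simp [gluePow]
    rw [z]
    have dg' : HasDerivWithinAt (gluePow (m + 2) g h) 0 (Set.Iic 0) 0 := by
      have := dg.hasDerivWithinAt (s := Set.Iic 0)
      simp only [pow_succ, mul_zero, zero_mul] at this
      refine this.congr (fun y hy => ?_) (by simp [gluePow])
      rcases (Set.mem_Iic.1 hy).lt_or_eq with h0 | h0
      · simp [gluePow, h0, pow_succ]
      · simp [gluePow, h0]
    have dh' : HasDerivWithinAt (gluePow (m + 2) g h) 0 (Set.Ici 0) 0 := by
      have := dh.hasDerivWithinAt (s := Set.Ici 0)
      simp only [pow_succ, mul_zero, zero_mul] at this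
      refine this.congr (fun y hy => ?_) (by simp [gluePow])
      simp [gluePow, not_lt.2 (Set.mem_Ici.1 hy), pow_succ]
    have := dg'.union dh'
    rwa [Set.Iic_union_Ici, hasDerivWithinAt_univ] at this
  · have e : gluePow (m + 2) g h =ᶠ[nhds x] fun y => y ^ (m + 1 + 1) * h y := by
      filter_upwards [Ioi_mem_nhds hx] with y hy
      exact if_neg (not_lt.2 (le_of_lt hy))
    simpa [gluePow, not_lt.2 hx.le] using dh.congr_of_eventuallyEq e

lemma glue_contDiff (n : ℕ) : ∀ {g h : ℝ → ℝ}, ContDiff ℝ (⊤ : ℕ∞) g → ContDiff ℝ (⊤ : ℕ∞) h →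
    ContDiff ℝ n (gluePow (n + 1) g h) ∧
      ∀ k ≤ n, iteratedDeriv k (gluePow (n + 1) g h) 0 = 0 := by
  induction n with
  | zero =>
    intro g h hg hh
    refine ⟨?_, fun k hk => ?_⟩
    · have : Continuous (gluePow (0 + 1) g h) := by
        refine Continuous.if (fun a ha => ?_) (by fun_prop) (by fun_prop)
        obtain rfl : a = 0 := by simpa [frontier_Iio] using (show a ∈ frontier (Set.Iio 0) from ha)
        simp
      exact_mod_cast contDiff_zero.2 this
    · obtain rfl : k = 0 := by omega
      simp [gluePow]
  | succ n ih =>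
    intro g h hg hh
    have hd := hasDerivAt_gluePow n hg hh
    have hderiv : deriv (gluePow (n + 1 + 1) g h) =
        gluePow (n + 1) (derivCofactor (n + 1) g) (derivCofactor (n + 1) h) :=
      funext fun x => (hd x).deriv
    obtain ⟨ih1, ih2⟩ := ih (contDiff_derivCofactor (n + 1) hg) (contDiff_derivCofactor (n + 1) hh)
    refine ⟨?_, fun k hk => ?_⟩
    · push_cast
      rw [contDiff_succ_iff_deriv]
      refine ⟨fun x => (hd x).differentiableAt, by simp, ?_⟩
      rwa [hderiv]
    · rcases k with _ | k
      · simp [gluePow]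
      · rw [iteratedDeriv_succ', hderiv]
        exact ih2 k (by omega)

/-- The quadratic polynomial `q` with `v(π s) = s q(s)`. -/
noncomputable def quotCK (p : ℕ) (s : ℝ) : ℝ :=
  (1 / (p : ℝ) - 1 / 2) * (-3 + 3 * s - s ^ 2) + 1 / (p : ℝ)

/-- The function `G` with `w(π s) = s ^ p G(s)`. -/
noncomputable def cofactorCK (p : ℕ) (s : ℝ) : ℝ :=
  2 * π * quotCK p s ^ p / ((s * quotCK p s) ^ p + (1 - s * quotCK p s) ^ p)

/-- For odd `p` the sum is `x ^ p - (x - 1) ^ p`, positive by strict monotonicity. -/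
lemma pow_add_one_sub_pow_pos {p : ℕ} (hp : p ≠ 0) (x : ℝ) : 0 < x ^ p + (1 - x) ^ p := by
  rcases Nat.even_or_odd p with he | ho
  · rcases eq_or_ne x 0 with rfl | hx
    · simp [hp]
    · exact add_pos_of_pos_of_nonneg (he.pow_pos hx) (he.pow_nonneg _)
  · have h1 : (x - 1) ^ p < x ^ p := ho.strictMono_pow (by linarith)
    have h2 : (1 - x) ^ p = -(x - 1) ^ p := by rw [← ho.neg_pow]; ring
    linarith

lemma wCK_pi_mul (p : ℕ) (s : ℝ) : wCK p (π * s) = s ^ p * cofactorCK p s := by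
  have h1 : vCK p (π * s) = s * quotCK p s := by
    have e1 : (π - π * s) / π = 1 - s := by field_simp
    have e2 : (π * s - π) / π = s - 1 := by field_simp
    rw [vCK, e1, e2, quotCK]
    ring
  have h2 : vCK p (2 * π - π * s) = 1 - s * quotCK p s := by
    have e1 : (π - (2 * π - π * s)) / π = s - 1 := by field_simp; ring
    have e2 : (2 * π - π * s - π) / π = 1 - s := by field_simp; ring
    rw [vCK, e1, e2, quotCK]
    ring
  rw [wCK, h1, h2, cofactorCK]
  ring

lemma contDiff_cofactorCK {p : ℕ} (hp : p ≠ 0) : ContDiff ℝ (⊤ : ℕ∞) (cofactorCK p) := by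
  have hq : ContDiff ℝ (⊤ : ℕ∞) (quotCK p) := by
    unfold quotCK
    fun_prop
  refine ContDiff.div (by fun_prop) (by fun_prop) fun s => ?_
  exact (pow_add_one_sub_pow_pos hp _).ne'

/-- For `τ < 0` the factor `(-1) ^ p` comes from `|τ| ^ p = (-1) ^ p * τ ^ p`. -/
lemma wRP_eq_gluePow {p : ℕ} (hp : p ≠ 0) (α : ℝ) :
    wRP p α = fun τ => α + gluePow p
      (fun x => (-1 - α) / π * (-1) ^ p * cofactorCK p (-x))
      (fun x => (1 - α) / π * cofactorCK p x) τ := by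
  funext τ
  rw [wRP, wCK_pi_mul]
  rcases lt_trichotomy τ 0 with h | h | h
  · simp only [gluePow, h, if_true, Real.sign_of_neg h, abs_of_neg h]
    rw [neg_pow τ p]
    ring
  · subst h
    simp [gluePow, hp]
  · simp only [gluePow, not_lt.2 h.le, if_false, Real.sign_of_pos h, abs_of_pos h]
    ring

theorem wRP_clustering_at_target (p : ℕ) (hp : 2 ≤ p)
    (α : ℝ) (hα : α ∈ Set.Ioo (-1 : ℝ) 1) :
    ContDiffOn ℝ (p - 1 : ℕ) (wRP p α) (Set.Ioo (-1) 1) ∧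
    (∀ k : ℕ, 1 ≤ k → k ≤ p - 1 → iteratedDeriv k (wRP p α) 0 = 0) := by
  have hp0 : p ≠ 0 := by omega
  have hG := contDiff_cofactorCK hp0
  obtain ⟨h1, h2⟩ := glue_contDiff (p - 1)
    (g := fun x => (-1 - α) / π * (-1) ^ p * cofactorCK p (-x))
    (h := fun x => (1 - α) / π * cofactorCK p x) (by fun_prop) (by fun_prop)
  rw [Nat.sub_add_cancel (by omega : 1 ≤ p)] at h1 h2
  rw [wRP_eq_gluePow hp0 α]
  refine ⟨(contDiff_const.add h1).contDiffOn, fun k hk1 hk2 => ?_⟩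
  rw [iteratedDeriv_const_add (by omega)]
  exact h2 k hk2
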